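/- arXiv:math/0208169 — 3 statements merged into one kernel-verified Lean document; each statement's English description precedes it below -/
import Mathlib

section
/- Let g be a Lie algebra over a field k, and let E be a finite-dimensional g-module with the property that every g-submodule of E admits a complementary g-submodule. Then E decomposes as the internal direct sum E = E^g ⊕ g·E, where E^g = {e ∈ E : ξ·e = 0 for all ξ ∈ g} is the submodule of invariants and g·E is the k-linear span of {ξ·e : ξ ∈ g, e ∈ E}. -/
/-! Both halves come from choosing a complement of one of the two submodules.
If `N` is a complement of `E^g`, write `e = t + n`; then `⁅ξ, e⁆ = ⁅ξ, n⁆ ∈ N`, so `g·E ≤ N` and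
hence `g·E` meets `E^g` trivially. If `W` is a complement of `g·E`, then `⁅ξ, w⁆ ∈ g·E ⊓ W = 0`
for `w ∈ W`, so `W ≤ E^g` and hence `E^g + g·E = E`. -/

/-- Let `g` be a Lie algebra over a field `k` and `E` a finite-dimensional `g`-module in
which every `g`-submodule admits a complementary `g`-submodule.  Then `E` is the internal
direct sum of the invariants `E^g = {e | ∀ ξ, ⁅ξ,e⁆ = 0}` (the maximal trivial submodule)
and `g·E`, the span of all brackets `⁅ξ, e⁆`. -/
theorem stmt3 (k : Type*) [Field k] (g : Type*) [LieRing g] [LieAlgebra k g]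
    (E : Type*) [AddCommGroup E] [Module k E] [LieRingModule g E] [LieModule k g E]
    [FiniteDimensional k E]
    (hcompl : ∀ N : LieSubmodule k g E, ∃ N' : LieSubmodule k g E, IsCompl N N') :
    IsCompl
      ((LieModule.maxTrivSubmodule k g E : LieSubmodule k g E) : Submodule k E)
      (Submodule.span k {m : E | ∃ (ξ : g) (e : E), ⁅ξ, e⁆ = m}) := by
  constructor
  · obtain ⟨N, hN⟩ := hcompl (LieModule.maxTrivSubmodule k g E)
    have hle : Submodule.span k {m : E | ∃ (ξ : g) (e : E), ⁅ξ, e⁆ = m} ≤ (N : Submodule k E) := by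
      rw [Submodule.span_le]
      rintro _ ⟨ξ, e, rfl⟩
      have he : e ∈ LieModule.maxTrivSubmodule k g E ⊔ N := by
        rw [hN.sup_eq_top]; exact LieSubmodule.mem_top e
      obtain ⟨t, ht, n, hn, rfl⟩ := (LieSubmodule.mem_sup _ _ _).1 he
      rw [lie_add, (LieModule.mem_maxTrivSubmodule k g E t).1 ht ξ, zero_add]
      exact N.lie_mem hn
    exact (LieSubmodule.disjoint_toSubmodule.2 hN.disjoint).mono_right hle
  · -- `g·E` is a Lie submodule since every bracket `⁅ξ, m⁆` is itself a generator.
    let G : LieSubmodule k g E :=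
      { Submodule.span k {m : E | ∃ (ξ : g) (e : E), ⁅ξ, e⁆ = m} with
        lie_mem := fun {ξ m} _ => Submodule.subset_span ⟨ξ, m, rfl⟩ }
    obtain ⟨W, hW⟩ := hcompl G
    have hle : W ≤ LieModule.maxTrivSubmodule k g E := by
      intro w hw
      rw [LieModule.mem_maxTrivSubmodule]
      intro ξ
      have hG : ⁅ξ, w⁆ ∈ G := Submodule.subset_span ⟨ξ, w, rfl⟩
      have h : ⁅ξ, w⁆ ∈ G ⊓ W := (LieSubmodule.mem_inf _ _ _).2 ⟨hG, W.lie_mem hw⟩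
      rwa [hW.inf_eq_bot, LieSubmodule.mem_bot] at h
    have hcod : Codisjoint (W : Submodule k E) (G : Submodule k E) :=
      LieSubmodule.codisjoint_toSubmodule.2 hW.codisjoint.symm
    exact hcod.mono_left hle
end

section
/- Let g be a Lie algebra over ℝ with ⁅g,g⁆ = g, and suppose that every finite-dimensional g-module has the property that each of its submodules admits a complementary submodule. Let (C_•, ∂) be a chain complex of real vector spaces in which each C_k is a finite-dimensional g-module, the differential ∂ : C_k → C_{k−1} is g-equivariant, and for every ξ ∈ g and every k there is a linear map i_ξ : C_{k−1} → C_k satisfying ξ·a = ∂(i_ξ a) + i_ξ(∂a) for all a ∈ C_k (where i_ξ is taken in the appropriate degrees). Then the degreewise invariants C_k^g form a subcomplex of (C_•, ∂), and the inclusion of this invariant subcomplex into C_• induces an isomorphism on homology in every degree. -/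
/-! The homotopy identity says that `g` maps cycles into boundaries, since `⁅ξ, z⁆ = d (i_ξ z)` when
`d z = 0`.  Complete reducibility gives a submodule complementary to the boundaries, and the
component in it of a cycle `z` is an invariant cycle homologous to `z`.  For injectivity, if
`d b = z` is invariant then `g` maps `b` into the cycles, by equivariance of `d`; the component of
`b` in a complement of the cycles is invariant and has the same boundary `z`.  Both halves use
`exists_invariant_sub_mem`. -/

universe u v

/-- If the submodule `N` has a complementary submodule `N'` and `g` maps `m` into `N`, then `m` is
congruent modulo `N` to an invariant element, namely its component `m'` in `N'`: indeed
`⁅ξ, m'⁆` lies in both `N` and `N'`. -/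
theorem exists_invariant_sub_mem {g : Type u} [LieRing g] [LieAlgebra ℝ g] {E : Type v}
    [AddCommGroup E] [Module ℝ E] [LieRingModule g E] [LieModule ℝ g E]
    (N : LieSubmodule ℝ g E) (hN : ∃ N' : LieSubmodule ℝ g E, IsCompl N N')
    (m : E) (hm : ∀ ξ : g, ⁅ξ, m⁆ ∈ N) :
    ∃ m' : E, (∀ ξ : g, ⁅ξ, m'⁆ = 0) ∧ m - m' ∈ N := by
  obtain ⟨N', hc⟩ := hN
  have htop : m ∈ N ⊔ N' := by rw [hc.sup_eq_top]; trivial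
  obtain ⟨n, hn, n', hn', rfl⟩ := (LieSubmodule.mem_sup N N' m).1 htop
  refine ⟨n', fun ξ => ?_, by simpa using hn⟩
  have h1 : ⁅ξ, n'⁆ ∈ N := by
    have h := N.sub_mem (hm ξ) (N.lie_mem (x := ξ) hn)
    simpa [lie_add] using h
  have h2 : ⁅ξ, n'⁆ ∈ N ⊓ N' := (LieSubmodule.mem_inf N N' _).2 ⟨h1, N'.lie_mem hn'⟩
  rw [hc.inf_eq_bot] at h2
  simpa using h2

/-- Let `g` be a real Lie algebra with `⁅g,g⁆ = g` such that every finite-dimensional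
`g`-module has the property that each submodule has a complementary submodule.  Let
`(C_•, ∂)` be a chain complex of finite-dimensional `g`-modules with `g`-equivariant
differential `d k : C k → C (k-1)`, such that for every `ξ ∈ g` there is a family of
linear maps `i_ξ : C_{k-1} → C_k` with `ξ·a = ∂(i_ξ a) + i_ξ(∂ a)`.  Then:
(1) the degreewise invariants form a subcomplex, and the inclusion of this subcomplex
induces an isomorphism on homology in every degree, which we express as
(2) every cycle is, modulo a boundary, an invariant cycle (surjectivity on homology), and
(3) every invariant cycle bounding in `C` bounds by an invariant chain (injectivity on
homology).  (All statements are placed in degree `k-1`; as `k` runs over `ℤ` this covers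
every degree.) -/
theorem stmt5 (g : Type u) [LieRing g] [LieAlgebra ℝ g]
    (hperf : Submodule.span ℝ {x : g | ∃ a b : g, ⁅a, b⁆ = x} = ⊤)
    (hsemi : ∀ (E : Type v) [AddCommGroup E] [Module ℝ E] [LieRingModule g E]
      [LieModule ℝ g E] [FiniteDimensional ℝ E],
      ∀ N : LieSubmodule ℝ g E, ∃ N' : LieSubmodule ℝ g E, IsCompl N N')
    (C : ℤ → Type v) [∀ k, AddCommGroup (C k)] [∀ k, Module ℝ (C k)]
    [∀ k, LieRingModule g (C k)] [∀ k, LieModule ℝ g (C k)]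
    [∀ k, FiniteDimensional ℝ (C k)]
    (d : ∀ k : ℤ, C k →ₗ[ℝ] C (k - 1))
    (hdd : ∀ (k : ℤ) (a : C k), d (k - 1) (d k a) = 0)
    (hequiv : ∀ (k : ℤ) (ξ : g) (a : C k), d k ⁅ξ, a⁆ = ⁅ξ, d k a⁆)
    (hhtpy : ∀ ξ : g, ∃ i : ∀ k : ℤ, C (k - 1) →ₗ[ℝ] C k,
      ∀ (k : ℤ) (a : C (k - 1)), ⁅ξ, a⁆ = d k (i k a) + i (k - 1) (d (k - 1) a)) :
    -- (1) the invariants form a subcomplex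
    (∀ (k : ℤ) (a : C k), (∀ ξ : g, ⁅ξ, a⁆ = 0) → ∀ ξ : g, ⁅ξ, d k a⁆ = 0) ∧
    -- (2) the inclusion is surjective on homology in every degree
    (∀ (k : ℤ) (z : C (k - 1)), d (k - 1) z = 0 →
      ∃ z' : C (k - 1), (∀ ξ : g, ⁅ξ, z'⁆ = 0) ∧ d (k - 1) z' = 0 ∧
        ∃ b : C k, z - z' = d k b) ∧
    -- (3) the inclusion is injective on homology in every degree
    (∀ (k : ℤ) (z : C (k - 1)), (∀ ξ : g, ⁅ξ, z⁆ = 0) → d (k - 1) z = 0 →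
      (∃ b : C k, d k b = z) →
      ∃ b : C k, (∀ ξ : g, ⁅ξ, b⁆ = 0) ∧ d k b = z) := by
  have hinv : ∀ (k : ℤ) (a : C k), (∀ ξ : g, ⁅ξ, a⁆ = 0) → ∀ ξ : g, ⁅ξ, d k a⁆ = 0 :=
    fun k a ha ξ => by rw [← hequiv, ha, map_zero]
  let D : ∀ k : ℤ, C k →ₗ⁅ℝ,g⁆ C (k - 1) := fun k =>
    { d k with map_lie' := fun {ξ a} => hequiv k ξ a }
  have hD : ∀ k a, D k a = d k a := fun _ _ => rfl
  refine ⟨hinv, fun k z hz => ?_, fun k z hzinv _ hzb => ?_⟩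
  · obtain ⟨z', hz', hsub⟩ := exists_invariant_sub_mem (D k).range (hsemi _ _) z (fun ξ => by
      obtain ⟨i, hi⟩ := hhtpy ξ
      refine ((D k).mem_range _).2 ⟨i k z, ?_⟩
      rw [hD, hi k z, hz, map_zero, add_zero])
    obtain ⟨b, hb⟩ := ((D k).mem_range _).1 hsub
    rw [hD] at hb
    refine ⟨z', hz', ?_, b, hb.symm⟩
    have h := hdd k b
    rw [hb, map_sub, hz, zero_sub, neg_eq_zero] at h
    exact h
  · obtain ⟨b, rfl⟩ := hzb
    obtain ⟨b', hb', hsub⟩ := exists_invariant_sub_mem (D k).ker (hsemi _ _) b (fun ξ => by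
      rw [LieModuleHom.mem_ker, hD, hequiv, hzinv])
    rw [LieModuleHom.mem_ker, hD, map_sub, sub_eq_zero] at hsub
    exact ⟨b', hb', hsub.symm⟩
end

section
/- Let k ≥ 1 and m ≥ 1 be natural numbers, and let P : Fin k × Fin k → ℝ[x] be a matrix of real polynomials such that each diagonal entry P(i,i) has degree exactly m and each off-diagonal entry P(i,j) (i ≠ j) has degree strictly less than m. Then there exists N such that for every natural number n ≥ N, the real k×k matrix whose (i,j) entry is the evaluation P(i,j)(n) is invertible. -/
/-!
For large `x` the matrix is strictly diagonally dominant: by the degree hypotheses each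
off-diagonal entry is `o(P (i, i))` at infinity, hence so is the sum of their absolute values
along a row, while `P (i, i)` has no root beyond some point. A strictly diagonally dominant matrix
has nonzero determinant (Gershgorin, `det_ne_zero_of_sum_row_lt_diag`).
-/

open Filter Asymptotics in
/-- Strict diagonal dominance of row `i` at infinity: a finite sum of polynomials of degree smaller
than that of `Q ≠ 0`, taken in absolute value, is eventually smaller than `|Q|`. -/
theorem eventually_sum_norm_eval_lt {ι : Type*} (s : Finset ι) (p : ι → Polynomial ℝ)
    (Q : Polynomial ℝ) (hQ : Q ≠ 0) (h : ∀ j ∈ s, (p j).degree < Q.degree) :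
    ∀ᶠ x : ℝ in atTop, ∑ j ∈ s, ‖(p j).eval x‖ < ‖Q.eval x‖ := by
  have ho : (fun x : ℝ => ∑ j ∈ s, ‖(p j).eval x‖) =o[atTop] fun x => Q.eval x :=
    IsLittleO.fun_sum fun j hj => (Polynomial.isLittleO_atTop_of_degree_lt _ _ (h j hj)).norm_left
  filter_upwards [ho.bound (show (0 : ℝ) < 1 / 2 by norm_num),
    Polynomial.eventually_atTop_not_isRoot Q hQ] with x hx hroot
  have hpos : 0 < ‖Q.eval x‖ := norm_pos_iff.mpr hroot
  have hle := (le_abs_self _).trans hx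
  linarith

/-- Let `P` be a `k×k` matrix of real polynomials whose diagonal entries have degree
exactly `m` and whose off-diagonal entries have degree strictly less than `m`.  Then for
all sufficiently large natural numbers `n`, the real matrix obtained by evaluating every
entry at `n` is invertible. -/
theorem stmt6 (k m : ℕ) (hk : 1 ≤ k) (hm : 1 ≤ m)
    (P : Fin k × Fin k → Polynomial ℝ)
    (hdiag : ∀ i : Fin k, (P (i, i)).degree = (m : ℕ))
    (hoff : ∀ i j : Fin k, i ≠ j → (P (i, j)).degree < (m : ℕ)) :
    ∃ N : ℕ, ∀ n : ℕ, N ≤ n →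
      IsUnit (Matrix.of fun i j : Fin k => (P (i, j)).eval (n : ℝ)) := by
  have hrow : ∀ i : Fin k, ∀ᶠ x : ℝ in Filter.atTop,
      ∑ j ∈ Finset.univ.erase i, ‖(P (i, j)).eval x‖ < ‖(P (i, i)).eval x‖ := fun i => by
    refine eventually_sum_norm_eval_lt _ (fun j => P (i, j)) _ ?_ fun j hj => ?_
    · intro h0
      simpa [h0] using hdiag i
    · rw [hdiag i]
      exact hoff i j (Finset.ne_of_mem_erase hj).symm
  obtain ⟨N, hN⟩ := Filter.eventually_atTop.mp
    (tendsto_natCast_atTop_atTop.eventually (Filter.eventually_all.mpr hrow))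
  refine ⟨N, fun n hn => ?_⟩
  rw [Matrix.isUnit_iff_isUnit_det, isUnit_iff_ne_zero]
  exact det_ne_zero_of_sum_row_lt_diag fun i => hN n hn i
end
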